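/- arXiv:0808.0414 — 2 statements merged into one kernel-verified Lean document; each statement's English description precedes it below -/
import Mathlib

section
/- If f is an integrable vector field on R^n with div f = 0 in the sense of distributions, then the integral of f over R^n is zero. -/
open MeasureTheory RealInnerProductSpace

/-! Truncate a linear functional `ℓ` to a test function `g` with `g = ℓ` near `0`. The dilates
`x ↦ c⁻¹ g (c x)` are again test functions, with derivative `Dg (c x)`, so
`∫ Dg (c x) (f x) dμ = 0` for every `c ≠ 0`. Since `Dg` is bounded and continuous, the integral is
continuous in `c`, and its value at `c = 0` is `ℓ (∫ f dμ)`. -/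

section

open Topology

lemma exists_contDiff_hasCompactSupport_eventuallyEq {E F : Type*} [NormedAddCommGroup E]
    [NormedSpace ℝ E] [FiniteDimensional ℝ E] [NormedAddCommGroup F] [NormedSpace ℝ F] {n : ℕ∞}
    {h : E → F} (hh : ContDiff ℝ n h) (x₀ : E) :
    ∃ g : E → F, ContDiff ℝ n g ∧ HasCompactSupport g ∧ g =ᶠ[𝓝 x₀] h := by
  let ψ : ContDiffBump x₀ := ⟨1, 2, one_pos, one_lt_two⟩
  refine ⟨fun x => ψ x • h x, ψ.contDiff.smul hh, ψ.hasCompactSupport.smul_right, ?_⟩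
  filter_upwards [ψ.eventuallyEq_one] with x hx
  simp [hx]

lemma fderiv_inv_smul_comp_smul {𝕜 E F : Type*} [NontriviallyNormedField 𝕜]
    [NormedAddCommGroup E] [NormedSpace 𝕜 E] [NormedAddCommGroup F] [NormedSpace 𝕜 F]
    (g : E → F) {c : 𝕜} (hc : c ≠ 0) (x : E) :
    fderiv 𝕜 (c⁻¹ • fun y => g (c • y)) x = fderiv 𝕜 g (c • x) := by
  rw [fderiv_const_smul_field, Pi.smul_apply, fderiv_comp_smul, inv_smul_smul₀ hc]

lemma continuous_integral_clm_apply {𝕜 F G X T : Type*} [NontriviallyNormedField 𝕜]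
    [NormedAddCommGroup F] [NormedSpace 𝕜 F]
    [NormedAddCommGroup G] [NormedSpace 𝕜 G] [NormedSpace ℝ G]
    [TopologicalSpace T] [FirstCountableTopology T] [MeasurableSpace X] {μ : Measure X}
    {A : T → X → F →L[𝕜] G} {f : X → F} {C : ℝ} (hf : Integrable f μ)
    (hA_meas : ∀ t, AEStronglyMeasurable (A t) μ) (hA_bound : ∀ t, ∀ᵐ x ∂μ, ‖A t x‖ ≤ C)
    (hA_cont : ∀ᵐ x ∂μ, Continuous fun t => A t x) :
    Continuous fun t => ∫ x, A t x (f x) ∂μ := by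
  refine continuous_of_dominated (bound := fun x => C * ‖f x‖) (fun t => ?_) (fun t => ?_)
    (hf.norm.const_mul C) ?_
  · exact (ContinuousLinearMap.id 𝕜 (F →L[𝕜] G)).aestronglyMeasurable_comp₂
      (hA_meas t) hf.aestronglyMeasurable
  · filter_upwards [hA_bound t] with x hx using (A t x).le_of_opNorm_le hx (f x)
  · filter_upwards [hA_cont] with x hx using hx.clm_apply continuous_const

theorem stmt_0_general {E : Type*} [NormedAddCommGroup E] [NormedSpace ℝ E]
    [FiniteDimensional ℝ E] [MeasurableSpace E] [OpensMeasurableSpace E] {μ : Measure E}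
    {f : E → E} (hf : Integrable f μ)
    (hdiv : ∀ φ : E → ℝ, ContDiff ℝ (⊤ : ℕ∞) φ → HasCompactSupport φ →
      ∫ x, fderiv ℝ φ x (f x) ∂μ = 0) :
    ∫ x, f x ∂μ = 0 := by
  refine SeparatingDual.eq_zero_of_forall_dual_eq_zero (R := ℝ) fun ℓ => ?_
  obtain ⟨g, hg, hg_supp, hgℓ⟩ :=
    exists_contDiff_hasCompactSupport_eventuallyEq (n := ⊤) ℓ.contDiff 0
  have hDg : Continuous (fderiv ℝ g) := hg.continuous_fderiv (by simp)
  have hDg_zero : fderiv ℝ g 0 = ℓ := hgℓ.fderiv_eq.trans ℓ.fderiv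
  obtain ⟨C, hC⟩ := hDg.bounded_above_of_compact_support (hg_supp.fderiv ℝ)
  have hcont : Continuous fun c : ℝ => ∫ x, fderiv ℝ g (c • x) (f x) ∂μ :=
    continuous_integral_clm_apply hf
      (fun c => (hDg.comp (continuous_const_smul c)).aestronglyMeasurable)
      (fun c => .of_forall fun x => hC (c • x))
      (.of_forall fun x => hDg.comp (continuous_id.smul continuous_const))
  have hdilate (c : ℝ) (hc : c ≠ 0) : ∫ x, fderiv ℝ g (c • x) (f x) ∂μ = 0 := by
    simp_rw [← fderiv_inv_smul_comp_smul g hc]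
    exact hdiv _ ((hg.comp (contDiff_const_smul c)).const_smul c⁻¹)
      ((hg_supp.comp_smul hc).smul_left (f := fun _ => c⁻¹))
  have hzero := congrFun (hcont.ext_on (dense_compl_singleton 0) continuous_const hdilate) 0
  simpa only [zero_smul, hDg_zero, ℓ.integral_comp_comm hf] using hzero

end

/-- If `f` is an integrable vector field on `ℝⁿ` whose distributional divergence vanishes
(i.e. `∫ ⟪f x, ∇φ x⟫ dx = 0` for all smooth compactly supported test functions `φ`),
then `∫ f dx = 0`. -/
theorem stmt_0 (n : ℕ) (f : EuclideanSpace ℝ (Fin n) → EuclideanSpace ℝ (Fin n))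
    (hf : Integrable f)
    (hdiv : ∀ φ : EuclideanSpace ℝ (Fin n) → ℝ, ContDiff ℝ (⊤ : ℕ∞) φ → HasCompactSupport φ →
      ∫ x, ⟪f x, gradient φ x⟫ = 0) :
    ∫ x, f x = 0 := by
  exact stmt_0_general hf fun φ hφ hφ_supp => by
    simpa only [inner_gradient_right, conj_trivial] using hdiv φ hφ hφ_supp
end

section
/- For n ≥ 2 and f ∈ L^1(R^n), the three-part kernel estimate ∫_{R^n} (A_1(x) + A_2(x) + A_3(x)) |x|^{-1} dx ≤ c(n) ‖f‖_{L^1} holds, where A_1(x) = |x|^{-n} ∫_{|y|<|x|/2} |f(y)||y| dy, A_2(x) = ∫_{|x|/2 < |y| < 2|x|} |f(y)| |y−x|^{1-n} dy, and A_3(x) = ∫_{|y| > 2|x|} |f(y)| |y|^{1-n} dy. -/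
open MeasureTheory

/-!
Each `A_i(x) |x|⁻¹` is the integral of `|f|` against a nonnegative kernel, so by Tonelli's theorem
it is enough to bound the integral of that kernel over `x` uniformly in `y`. In polar coordinates,
the kernel of `A₁` contributes `|y| ∫_{|x| > 2|y|} |x|^{-n-1} dx`, and that of `A₃` contributes
`|y|^{1-n} ∫_{|x| < |y|/2} |x|⁻¹ dx`, which converges at the origin because `n ≥ 2`. On the region
of `A₂` the weight `|x|⁻¹` is at most `2 |y|⁻¹` and `x` lies in the ball of radius `3 |y|` about
`y`, over which `|x - y|^{1-n}` integrates to a multiple of `|y|`.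
-/

open Function Metric Module Set
open scoped ENNReal

section Tonelli

variable {α β F : Type*} [MeasurableSpace α] [MeasurableSpace β] {μ : Measure α} {ν : Measure β}
  [NormedAddCommGroup F]

theorem ofReal_integral_le_lintegral_ofReal (f : α → ℝ) :
    ENNReal.ofReal (∫ x, f x ∂μ) ≤ ∫⁻ x, ENNReal.ofReal (f x) ∂μ := by
  by_cases hf : Integrable f μ
  · refine ENNReal.ofReal_le_of_le_toReal ?_
    rw [integral_eq_lintegral_pos_part_sub_lintegral_neg_part hf]
    exact sub_le_self _ ENNReal.toReal_nonneg
  · simp [integral_undef hf]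

theorem ofReal_setIntegral_norm_mul_le_lintegral_indicator (f : α → F) (k : α → ℝ) {s : Set α}
    (hs : MeasurableSet s) :
    ENNReal.ofReal (∫ x in s, ‖f x‖ * k x ∂μ) ≤
      ∫⁻ x, ‖f x‖ₑ * s.indicator (fun x ↦ ENNReal.ofReal (k x)) x ∂μ := by
  refine (ofReal_integral_le_lintegral_ofReal _).trans_eq ?_
  rw [← lintegral_indicator hs]
  refine lintegral_congr fun x ↦ ?_
  by_cases hx : x ∈ s <;> simp [hx, ENNReal.ofReal_mul]

theorem lintegral_lintegral_mul_le_of_lintegral_le [SFinite μ] [SFinite ν] {g : β → ℝ≥0∞}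
    (hg : AEMeasurable g ν) {k : α → β → ℝ≥0∞} (hk : Measurable (uncurry k)) {C : ℝ≥0∞}
    (hC : ∀ y, ∫⁻ x, k x y ∂μ ≤ C) :
    ∫⁻ x, ∫⁻ y, g y * k x y ∂ν ∂μ ≤ C * ∫⁻ y, g y ∂ν := by
  rw [lintegral_lintegral_swap (hg.comp_snd.mul hk.aemeasurable), ← lintegral_const_mul'' _ hg]
  refine lintegral_mono fun y ↦ ?_
  rw [lintegral_const_mul _ hk.of_uncurry_right, mul_comm]
  gcongr
  exact hC y

end Tonelli

section PowerIntegrals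

theorem setLIntegral_Ioo_zero_rpow {a R : ℝ} (ha : -1 < a) (hR : 0 ≤ R) :
    ∫⁻ r in Ioo 0 R, ENNReal.ofReal (r ^ a) = ENNReal.ofReal (R ^ (a + 1) / (a + 1)) := by
  have hint := (intervalIntegral.intervalIntegrable_rpow' (a := 0) (b := R) ha).1
  rw [setLIntegral_congr Ioo_ae_eq_Ioc, ← ofReal_integral_eq_lintegral_ofReal hint,
    ← intervalIntegral.integral_of_le hR, integral_rpow (.inl ha),
    Real.zero_rpow (by linarith), sub_zero]
  filter_upwards [ae_restrict_mem measurableSet_Ioc] with r hr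
  exact Real.rpow_nonneg hr.1.le a

theorem setLIntegral_Ioi_rpow {a R : ℝ} (ha : a < -1) (hR : 0 < R) :
    ∫⁻ r in Ioi R, ENNReal.ofReal (r ^ a) = ENNReal.ofReal (-R ^ (a + 1) / (a + 1)) := by
  rw [← ofReal_integral_eq_lintegral_ofReal (integrableOn_Ioi_rpow_of_lt ha hR),
    integral_Ioi_rpow_of_lt ha hR]
  filter_upwards [ae_restrict_mem measurableSet_Ioi] with r hr
  exact Real.rpow_nonneg (hR.trans hr).le a

variable {E : Type*} [NormedAddCommGroup E] [NormedSpace ℝ E] [FiniteDimensional ℝ E]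
  [MeasurableSpace E] [BorelSpace E] [Nontrivial E] (μ : Measure E) [μ.IsAddHaarMeasure]

theorem lintegral_fun_norm_addHaar {g : ℝ → ℝ≥0∞} (hg : Measurable g) :
    ∫⁻ x, g ‖x‖ ∂μ =
      μ.toSphere univ * ∫⁻ r in Ioi 0, ENNReal.ofReal (r ^ (finrank ℝ E - 1)) * g r :=
  calc
    ∫⁻ x, g ‖x‖ ∂μ = ∫⁻ x : ({0}ᶜ : Set E), g ‖x.1‖ ∂(μ.comap (↑)) := by
      rw [lintegral_subtype_comap (measurableSet_singleton _).compl fun x ↦ g ‖x‖,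
        restrict_compl_singleton]
    _ = ∫⁻ p, g p.2 ∂μ.toSphere.prod (.volumeIoiPow (finrank ℝ E - 1)) := by
      simpa using μ.measurePreserving_homeomorphUnitSphereProd.lintegral_comp_emb
        (Homeomorph.measurableEmbedding _) (g ∘ Subtype.val ∘ Prod.snd)
    _ = μ.toSphere univ * ∫⁻ r : Ioi (0 : ℝ), g r ∂.volumeIoiPow (finrank ℝ E - 1) := by
      rw [lintegral_prod _ (by fun_prop)]
      simp only [lintegral_const, mul_comm]
    _ = _ := by
      rw [Measure.volumeIoiPow, lintegral_withDensity_eq_lintegral_mul _ (by fun_prop)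
        (by fun_prop), ← lintegral_subtype_comap measurableSet_Ioi]
      rfl

theorem setLIntegral_norm_preimage_rpow {s : Set ℝ} (hs : MeasurableSet s) (a : ℝ) :
    ∫⁻ x in norm ⁻¹' s, ENNReal.ofReal (‖x‖ ^ a) ∂μ =
      μ.toSphere univ * ∫⁻ r in Ioi 0 ∩ s, ENNReal.ofReal (r ^ (finrank ℝ E - 1 + a)) := by
  calc
    _ = ∫⁻ x, s.indicator (fun r ↦ ENNReal.ofReal (r ^ a)) ‖x‖ ∂μ := by
      rw [← lintegral_indicator (measurable_norm hs)]
      rfl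
    _ = _ := by
      rw [lintegral_fun_norm_addHaar μ (Measurable.indicator (by fun_prop) hs),
        inter_comm, ← setLIntegral_indicator hs]
      congr 1
      refine setLIntegral_congr_fun measurableSet_Ioi fun r (hr : 0 < r) ↦ ?_
      by_cases hrs : r ∈ s
      · simp only [hrs, indicator_of_mem]
        rw [← ENNReal.ofReal_mul (by positivity), Real.rpow_add hr,
          ← Nat.cast_pred finrank_pos, Real.rpow_natCast]
      · simp [hrs]

theorem setLIntegral_ball_zero_norm_rpow {a R : ℝ} (ha : 0 < finrank ℝ E + a) (hR : 0 ≤ R) :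
    ∫⁻ x in ball 0 R, ENNReal.ofReal (‖x‖ ^ a) ∂μ =
      μ.toSphere univ * ENNReal.ofReal (R ^ (finrank ℝ E + a) / (finrank ℝ E + a)) := by
  have hball : ball (0 : E) R = norm ⁻¹' Iio R := by ext; simp
  rw [hball, setLIntegral_norm_preimage_rpow μ measurableSet_Iio, Ioi_inter_Iio,
    setLIntegral_Ioo_zero_rpow (by linarith) hR, sub_add_eq_add_sub, sub_add_cancel]

theorem setLIntegral_ball_norm_sub_rpow (c : E) {a R : ℝ} (ha : 0 < finrank ℝ E + a)
    (hR : 0 ≤ R) :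
    ∫⁻ x in ball c R, ENNReal.ofReal (‖x - c‖ ^ a) ∂μ =
      μ.toSphere univ * ENNReal.ofReal (R ^ (finrank ℝ E + a) / (finrank ℝ E + a)) := by
  rw [← setLIntegral_ball_zero_norm_rpow μ ha hR, ← lintegral_indicator measurableSet_ball,
    ← lintegral_indicator measurableSet_ball,
    ← lintegral_sub_right_eq_self ((ball 0 R).indicator _) c]
  simp only [indicator, mem_ball_iff_norm, sub_zero]

theorem setLIntegral_compl_closedBall_norm_rpow {a R : ℝ} (ha : finrank ℝ E + a < 0)
    (hR : 0 < R) :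
    ∫⁻ x in (closedBall 0 R)ᶜ, ENNReal.ofReal (‖x‖ ^ a) ∂μ =
      μ.toSphere univ * ENNReal.ofReal (-R ^ (finrank ℝ E + a) / (finrank ℝ E + a)) := by
  have hcompl : (closedBall (0 : E) R)ᶜ = norm ⁻¹' Ioi R := by ext; simp
  rw [hcompl, setLIntegral_norm_preimage_rpow μ measurableSet_Ioi, Ioi_inter_Ioi,
    max_eq_right hR.le, setLIntegral_Ioi_rpow (by linarith) hR, sub_add_eq_add_sub, sub_add_cancel]

end PowerIntegrals

section Parts

variable {E F : Type*} [NormedAddCommGroup E] [NormedSpace ℝ E] [MeasurableSpace E]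
  [NormedAddCommGroup F]

/-- The function `A₁(x) = |x|⁻ⁿ ∫_{|y| < |x|/2} |f(y)| |y| dy`, with `n = dim E`. -/
noncomputable def innerPart (μ : Measure E) (f : E → F) (x : E) : ℝ :=
  ‖x‖ ^ (-(finrank ℝ E : ℝ)) * ∫ y in {y | ‖y‖ < ‖x‖ / 2}, ‖f y‖ * ‖y‖ ∂μ

/-- The function `A₂(x) = ∫_{|x|/2 < |y| < 2|x|} |f(y)| |y - x|¹⁻ⁿ dy`, with `n = dim E`. -/
noncomputable def comparablePart (μ : Measure E) (f : E → F) (x : E) : ℝ :=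
  ∫ y in {y | ‖x‖ / 2 < ‖y‖ ∧ ‖y‖ < 2 * ‖x‖}, ‖f y‖ * ‖y - x‖ ^ ((1 : ℝ) - finrank ℝ E) ∂μ

/-- The function `A₃(x) = ∫_{|y| > 2|x|} |f(y)| |y|¹⁻ⁿ dy`, with `n = dim E`. -/
noncomputable def outerPart (μ : Measure E) (f : E → F) (x : E) : ℝ :=
  ∫ y in {y | 2 * ‖x‖ < ‖y‖}, ‖f y‖ * ‖y‖ ^ ((1 : ℝ) - finrank ℝ E) ∂μ

end Parts

section Kernels

variable {E : Type*} [NormedAddCommGroup E] [NormedSpace ℝ E]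

/-- The kernel against which `‖f‖` integrates to `innerPart μ f x * ‖x‖⁻¹`. -/
noncomputable def innerKernel (x y : E) : ℝ≥0∞ :=
  {y : E | ‖y‖ < ‖x‖ / 2}.indicator
    (fun y ↦ ENNReal.ofReal (‖x‖ ^ (-(finrank ℝ E : ℝ)) * ‖y‖ * ‖x‖⁻¹)) y

/-- The kernel against which `‖f‖` integrates to `comparablePart μ f x * ‖x‖⁻¹`. -/
noncomputable def comparableKernel (x y : E) : ℝ≥0∞ :=
  {y : E | ‖x‖ / 2 < ‖y‖ ∧ ‖y‖ < 2 * ‖x‖}.indicator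
    (fun y ↦ ENNReal.ofReal (‖y - x‖ ^ ((1 : ℝ) - finrank ℝ E) * ‖x‖⁻¹)) y

/-- The kernel against which `‖f‖` integrates to `outerPart μ f x * ‖x‖⁻¹`. -/
noncomputable def outerKernel (x y : E) : ℝ≥0∞ :=
  {y : E | 2 * ‖x‖ < ‖y‖}.indicator
    (fun y ↦ ENNReal.ofReal (‖y‖ ^ ((1 : ℝ) - finrank ℝ E) * ‖x‖⁻¹)) y

/-- The kernel against which `‖f‖` integrates to
`(innerPart μ f x + comparablePart μ f x + outerPart μ f x) * ‖x‖⁻¹`. -/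
noncomputable def threePartKernel (x y : E) : ℝ≥0∞ :=
  innerKernel x y + comparableKernel x y + outerKernel x y

section Measurability

variable [MeasurableSpace E] [BorelSpace E]

theorem measurable_innerKernel : Measurable (uncurry (innerKernel (E := E))) :=
  Measurable.indicator
    (f := fun p : E × E ↦ ENNReal.ofReal (‖p.1‖ ^ (-(finrank ℝ E : ℝ)) * ‖p.2‖ * ‖p.1‖⁻¹))
    (s := {p | ‖p.2‖ < ‖p.1‖ / 2})
    (by fun_prop) (measurableSet_lt (by fun_prop) (by fun_prop))

theorem measurable_comparableKernel [FiniteDimensional ℝ E] :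
    Measurable (uncurry (comparableKernel (E := E))) :=
  Measurable.indicator
    (f := fun p : E × E ↦ ENNReal.ofReal (‖p.2 - p.1‖ ^ ((1 : ℝ) - finrank ℝ E) * ‖p.1‖⁻¹))
    (s := {p | ‖p.1‖ / 2 < ‖p.2‖} ∩ {p | ‖p.2‖ < 2 * ‖p.1‖})
    (by fun_prop) ((measurableSet_lt (by fun_prop) (by fun_prop)).inter
      (measurableSet_lt (by fun_prop) (by fun_prop)))

theorem measurable_outerKernel : Measurable (uncurry (outerKernel (E := E))) :=
  Measurable.indicator
    (f := fun p : E × E ↦ ENNReal.ofReal (‖p.2‖ ^ ((1 : ℝ) - finrank ℝ E) * ‖p.1‖⁻¹))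
    (s := {p | 2 * ‖p.1‖ < ‖p.2‖})
    (by fun_prop) (measurableSet_lt (by fun_prop) (by fun_prop))

theorem measurable_threePartKernel [FiniteDimensional ℝ E] :
    Measurable (uncurry (threePartKernel (E := E))) :=
  (measurable_innerKernel.add measurable_comparableKernel).add measurable_outerKernel

end Measurability

theorem innerKernel_le (x y : E) :
    innerKernel x y ≤ ENNReal.ofReal ‖y‖ * (closedBall 0 (2 * ‖y‖))ᶜ.indicator
      (fun x ↦ ENNReal.ofReal (‖x‖ ^ (-(finrank ℝ E : ℝ) - 1))) x := by
  by_cases hxy : ‖y‖ < ‖x‖ / 2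
  swap
  · simp [innerKernel, hxy]
  rw [innerKernel, indicator_of_mem (mem_ofPred_eq ▸ hxy)]
  have hx : 0 < ‖x‖ := by linarith [norm_nonneg y]
  rw [indicator_of_mem (by simp only [mem_compl_iff, mem_closedBall_zero_iff]; linarith),
    ← ENNReal.ofReal_mul (norm_nonneg y), Real.rpow_sub_one hx.ne', div_eq_mul_inv]
  exact (congrArg ENNReal.ofReal (by ring)).le

theorem comparableKernel_le (x y : E) :
    comparableKernel x y ≤ ENNReal.ofReal (2 * ‖y‖⁻¹) * (ball y (3 * ‖y‖)).indicator
      (fun x ↦ ENNReal.ofReal (‖x - y‖ ^ ((1 : ℝ) - finrank ℝ E))) x := by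
  by_cases hxy : ‖x‖ / 2 < ‖y‖ ∧ ‖y‖ < 2 * ‖x‖
  swap
  · simp [comparableKernel, hxy]
  rw [comparableKernel, indicator_of_mem (mem_ofPred_eq ▸ hxy)]
  obtain ⟨hxy, hyx⟩ := hxy
  have hx : 0 < ‖x‖ := by linarith [norm_nonneg y]
  have hy : 0 < ‖y‖ := by linarith
  have hinv : ‖x‖⁻¹ ≤ 2 * ‖y‖⁻¹ := by
    rw [← div_eq_mul_inv, inv_le_comm₀ hx (by positivity), inv_div]
    linarith
  rw [indicator_of_mem (by rw [mem_ball_iff_norm]; linarith [norm_sub_le x y]),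
    ← ENNReal.ofReal_mul (by positivity), norm_sub_rev, mul_comm]
  gcongr

theorem outerKernel_le (x y : E) :
    outerKernel x y ≤ ENNReal.ofReal (‖y‖ ^ ((1 : ℝ) - finrank ℝ E)) *
      (ball 0 (‖y‖ / 2)).indicator (fun x ↦ ENNReal.ofReal (‖x‖ ^ (-1 : ℝ))) x := by
  by_cases hxy : 2 * ‖x‖ < ‖y‖
  swap
  · simp [outerKernel, hxy]
  rw [outerKernel, indicator_of_mem (mem_ofPred_eq ▸ hxy),
    indicator_of_mem (by rw [mem_ball_zero_iff]; linarith),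
    ← ENNReal.ofReal_mul (by positivity), Real.rpow_neg_one]

variable [FiniteDimensional ℝ E] [MeasurableSpace E] [BorelSpace E] (μ : Measure E)
  [μ.IsAddHaarMeasure]

theorem lintegral_innerKernel_le [Nontrivial E] (y : E) :
    ∫⁻ x, innerKernel x y ∂μ ≤ μ.toSphere univ := by
  rcases eq_or_ne y 0 with rfl | hy
  · simp [innerKernel, indicator]
  have hy : 0 < ‖y‖ := norm_pos_iff.2 hy
  have hexp : (finrank ℝ E : ℝ) + (-finrank ℝ E - 1) = -1 := by ring
  calc
    _ ≤ ENNReal.ofReal ‖y‖ * (μ.toSphere univ * ENNReal.ofReal (2 * ‖y‖)⁻¹) := by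
      refine (lintegral_mono fun x ↦ innerKernel_le x y).trans_eq ?_
      rw [lintegral_const_mul' _ _ ENNReal.ofReal_ne_top,
        lintegral_indicator measurableSet_closedBall.compl,
        setLIntegral_compl_closedBall_norm_rpow μ (by linarith) (by positivity), hexp,
        neg_div_neg_eq, div_one, Real.rpow_neg_one]
    _ = μ.toSphere univ * ENNReal.ofReal (1 / 2) := by
      rw [mul_left_comm, ← ENNReal.ofReal_mul hy.le]
      congr 2
      field_simp
    _ ≤ μ.toSphere univ := mul_le_of_le_one_right' (ENNReal.ofReal_le_one.2 (by norm_num))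

theorem lintegral_comparableKernel_le [Nontrivial E] (y : E) :
    ∫⁻ x, comparableKernel x y ∂μ ≤ 6 * μ.toSphere univ := by
  have hexp : (finrank ℝ E : ℝ) + (1 - finrank ℝ E) = 1 := by ring
  calc
    _ ≤ ENNReal.ofReal (2 * ‖y‖⁻¹) * (μ.toSphere univ * ENNReal.ofReal (3 * ‖y‖)) := by
      refine (lintegral_mono fun x ↦ comparableKernel_le x y).trans_eq ?_
      rw [lintegral_const_mul' _ _ ENNReal.ofReal_ne_top, lintegral_indicator measurableSet_ball,
        setLIntegral_ball_norm_sub_rpow μ y (by linarith) (by positivity), hexp, div_one,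
        Real.rpow_one]
    _ = ENNReal.ofReal (6 * (‖y‖⁻¹ * ‖y‖)) * μ.toSphere univ := by
      rw [mul_left_comm, ← ENNReal.ofReal_mul (by positivity), mul_comm]
      congr 2
      ring
    _ ≤ 6 * μ.toSphere univ := by
      gcongr
      rw [← ENNReal.ofReal_ofNat]
      exact ENNReal.ofReal_le_ofReal (mul_le_of_le_one_right (by norm_num) inv_mul_le_one)

theorem lintegral_outerKernel_le (hE : 2 ≤ finrank ℝ E) (y : E) :
    ∫⁻ x, outerKernel x y ∂μ ≤ μ.toSphere univ := by
  have : Nontrivial E := nontrivial_of_finrank_pos (R := ℝ) (two_pos.trans_le hE)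
  have hE : (2 : ℝ) ≤ finrank ℝ E := mod_cast hE
  have hnonneg : (0 : ℝ) ≤ finrank ℝ E - 1 := by linarith
  have hpow : ‖y‖ ^ ((1 : ℝ) - finrank ℝ E) * (‖y‖ / 2) ^ ((finrank ℝ E : ℝ) - 1) ≤ 1 := by
    rw [← neg_sub, Real.rpow_neg (norm_nonneg y)]
    refine inv_mul_le_one_of_le₀ ?_ (by positivity)
    gcongr
    linarith [norm_nonneg y]
  calc
    _ ≤ ENNReal.ofReal (‖y‖ ^ ((1 : ℝ) - finrank ℝ E)) * (μ.toSphere univ *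
          ENNReal.ofReal ((‖y‖ / 2) ^ ((finrank ℝ E : ℝ) - 1) / (finrank ℝ E - 1))) := by
      refine (lintegral_mono fun x ↦ outerKernel_le x y).trans_eq ?_
      rw [lintegral_const_mul' _ _ ENNReal.ofReal_ne_top, lintegral_indicator measurableSet_ball,
        setLIntegral_ball_zero_norm_rpow μ (by linarith) (by positivity), ← sub_eq_add_neg]
    _ ≤ μ.toSphere univ := by
      rw [mul_left_comm, ← ENNReal.ofReal_mul (by positivity), ← mul_div_assoc]
      exact mul_le_of_le_one_right'
        (ENNReal.ofReal_le_one.2 (div_le_one_of_le₀ (by linarith) hnonneg))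

theorem lintegral_threePartKernel_le (hE : 2 ≤ finrank ℝ E) (y : E) :
    ∫⁻ x, threePartKernel x y ∂μ ≤ 8 * μ.toSphere univ := by
  have : Nontrivial E := nontrivial_of_finrank_pos (R := ℝ) (two_pos.trans_le hE)
  simp only [threePartKernel]
  rw [lintegral_add_right _ measurable_outerKernel.of_uncurry_right,
    lintegral_add_right _ measurable_comparableKernel.of_uncurry_right]
  calc
    _ ≤ μ.toSphere univ + 6 * μ.toSphere univ + μ.toSphere univ := by
      gcongr
      · exact lintegral_innerKernel_le μ y
      · exact lintegral_comparableKernel_le μ y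
      · exact lintegral_outerKernel_le μ hE y
    _ = 8 * μ.toSphere univ := by ring

end Kernels

section Estimate

variable {E F : Type*} [NormedAddCommGroup E] [NormedSpace ℝ E] [MeasurableSpace E]
  [BorelSpace E] [NormedAddCommGroup F] {μ : Measure E}

theorem ofReal_innerPart_mul_inv_norm_le (f : E → F) (x : E) :
    ENNReal.ofReal (innerPart μ f x * ‖x‖⁻¹) ≤ ∫⁻ y, ‖f y‖ₑ * innerKernel x y ∂μ := by
  have hfactor : innerPart μ f x * ‖x‖⁻¹ = ∫ y in {y | ‖y‖ < ‖x‖ / 2},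
      ‖f y‖ * (‖x‖ ^ (-(finrank ℝ E : ℝ)) * ‖y‖ * ‖x‖⁻¹) ∂μ := by
    rw [innerPart, ← integral_const_mul, ← integral_mul_const]
    congr with y
    ring
  rw [hfactor]
  exact ofReal_setIntegral_norm_mul_le_lintegral_indicator f _
    (measurableSet_lt (by fun_prop) (by fun_prop))

theorem ofReal_comparablePart_mul_inv_norm_le (f : E → F) (x : E) :
    ENNReal.ofReal (comparablePart μ f x * ‖x‖⁻¹) ≤ ∫⁻ y, ‖f y‖ₑ * comparableKernel x y ∂μ := by
  rw [comparablePart, ← integral_mul_const]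
  simp only [mul_assoc]
  exact ofReal_setIntegral_norm_mul_le_lintegral_indicator f _
    ((measurableSet_lt (f := fun _ ↦ ‖x‖ / 2) (by fun_prop) measurable_norm).inter
      (measurableSet_lt (g := fun _ ↦ 2 * ‖x‖) measurable_norm (by fun_prop)))

theorem ofReal_outerPart_mul_inv_norm_le (f : E → F) (x : E) :
    ENNReal.ofReal (outerPart μ f x * ‖x‖⁻¹) ≤ ∫⁻ y, ‖f y‖ₑ * outerKernel x y ∂μ := by
  rw [outerPart, ← integral_mul_const]
  simp only [mul_assoc]
  exact ofReal_setIntegral_norm_mul_le_lintegral_indicator f _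
    (measurableSet_lt (by fun_prop) (by fun_prop))

variable [FiniteDimensional ℝ E] {f : E → F}

theorem ofReal_parts_mul_inv_norm_le (hf : AEStronglyMeasurable f μ) (x : E) :
    ENNReal.ofReal ((innerPart μ f x + comparablePart μ f x + outerPart μ f x) * ‖x‖⁻¹) ≤
      ∫⁻ y, ‖f y‖ₑ * threePartKernel x y ∂μ := by
  have hcomparable : AEMeasurable (fun y ↦ ‖f y‖ₑ * comparableKernel x y) μ :=
    hf.enorm.mul measurable_comparableKernel.of_uncurry_left.aemeasurable
  have houter : AEMeasurable (fun y ↦ ‖f y‖ₑ * outerKernel x y) μ :=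
    hf.enorm.mul measurable_outerKernel.of_uncurry_left.aemeasurable
  simp only [threePartKernel, mul_add, add_mul]
  rw [lintegral_add_right' _ houter, lintegral_add_right' _ hcomparable]
  refine ENNReal.ofReal_add_le.trans (add_le_add (ENNReal.ofReal_add_le.trans ?_) ?_)
  · exact add_le_add (ofReal_innerPart_mul_inv_norm_le f x)
      (ofReal_comparablePart_mul_inv_norm_le f x)
  · exact ofReal_outerPart_mul_inv_norm_le f x

theorem stmt_6_general [μ.IsAddHaarMeasure] (hE : 2 ≤ finrank ℝ E) (hf : Integrable f μ) :
    ∫⁻ x, ENNReal.ofReal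
        ((innerPart μ f x + comparablePart μ f x + outerPart μ f x) * ‖x‖⁻¹) ∂μ ≤
      ENNReal.ofReal (8 * μ.toSphere.real univ * ∫ y, ‖f y‖ ∂μ) :=
  calc
    _ ≤ ∫⁻ x, ∫⁻ y, ‖f y‖ₑ * threePartKernel x y ∂μ ∂μ :=
      lintegral_mono fun x ↦ ofReal_parts_mul_inv_norm_le hf.1 x
    _ ≤ 8 * μ.toSphere univ * ∫⁻ y, ‖f y‖ₑ ∂μ :=
      lintegral_lintegral_mul_le_of_lintegral_le hf.1.enorm measurable_threePartKernel
        (lintegral_threePartKernel_le μ hE)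
    _ = _ := by
      rw [← ofReal_integral_norm_eq_lintegral_enorm hf, ENNReal.ofReal_mul (by positivity),
        ENNReal.ofReal_mul (by norm_num), ENNReal.ofReal_ofNat, ofReal_measureReal]

end Estimate

/-- The three-part kernel estimate
`∫ (A₁(x)+A₂(x)+A₃(x)) |x|⁻¹ dx ≤ c(n) ‖f‖_{L¹}`, where
`A₁(x) = |x|^{-n} ∫_{|y|<|x|/2} |f(y)||y| dy`,
`A₂(x) = ∫_{|x|/2<|y|<2|x|} |f(y)||y−x|^{1-n} dy`,
`A₃(x) = ∫_{|y|>2|x|} |f(y)||y|^{1-n} dy`. -/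
theorem stmt_6 (n : ℕ) (hn : 2 ≤ n) :
    ∃ c : ℝ, 0 < c ∧ ∀ f : EuclideanSpace ℝ (Fin n) → ℝ, Integrable f →
      (∫⁻ x : EuclideanSpace ℝ (Fin n), ENNReal.ofReal
          (((‖x‖ ^ (-(n : ℝ)) * ∫ y in {y : EuclideanSpace ℝ (Fin n) | ‖y‖ < ‖x‖ / 2},
                |f y| * ‖y‖) +
              (∫ y in {y : EuclideanSpace ℝ (Fin n) | ‖x‖ / 2 < ‖y‖ ∧ ‖y‖ < 2 * ‖x‖},
                |f y| * ‖y - x‖ ^ ((1 : ℝ) - n)) +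
              (∫ y in {y : EuclideanSpace ℝ (Fin n) | 2 * ‖x‖ < ‖y‖},
                |f y| * ‖y‖ ^ ((1 : ℝ) - n))) * ‖x‖⁻¹)) ≤
        ENNReal.ofReal (c * ∫ y, |f y|) := by
  have hE : 2 ≤ finrank ℝ (EuclideanSpace ℝ (Fin n)) := by simpa using hn
  have : Nontrivial (EuclideanSpace ℝ (Fin n)) :=
    nontrivial_of_finrank_pos (R := ℝ) (two_pos.trans_le hE)
  refine ⟨8 * (volume : Measure (EuclideanSpace ℝ (Fin n))).toSphere.real univ, ?_, fun f hf ↦ ?_⟩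
  · have : NeZero (volume : Measure (EuclideanSpace ℝ (Fin n))).toSphere :=
      ⟨Measure.toSphere_ne_zero _⟩
    exact mul_pos (by norm_num) measureReal_univ_pos
  · simpa only [innerPart, comparablePart, outerPart, finrank_euclideanSpace_fin,
      Real.norm_eq_abs] using stmt_6_general hE hf
end
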